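/- Fix P ∈ ℙ^n. Assume there exist zero-dimensional closed subschemes A, B ⊂ ℙ^m with A ≠ B such that P ∈ ⟨ν_d(A)⟩ ∩ ⟨ν_d(B)⟩, P ∉ ⟨ν_d(A')⟩ for every A' ⊊ A, P ∉ ⟨ν_d(B')⟩ for every B' ⊊ B, and B is reduced. Assume there exist a positive integer t ≤ d and a degree-t hypersurface D ⊂ ℙ^m such that h^1(I_{Res_D(A∪B)}(d−t)) = 0. Set E := B ∖ (B ∩ D). Then ν_d(E) is linearly independent, E = Res_D(A), every unreduced connected component of A is contained in D, and the linear space ⟨ν_d(A)⟩ ∩ ⟨ν_d(B)⟩ is spanned by its two supplementary subspaces ⟨ν_d(E)⟩ and ⟨ν_d(A ∩ D)⟩ ∩ ⟨ν_d(B ∩ D)⟩. -/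

import Mathlib

open scoped LinearAlgebra.Projectivization

noncomputable section

/-- The polynomial ring in `m+1` variables over `K`: homogeneous coordinate ring of `ℙ^m`. -/
abbrev PR (K : Type) [Field K] (m : ℕ) : Type := MvPolynomial (Fin (m+1)) K

/-- The space of degree-`d` forms in `m+1` variables. -/
abbrev Hd (K : Type) [Field K] (m d : ℕ) : Submodule K (PR K m) :=
  MvPolynomial.homogeneousSubmodule (Fin (m+1)) K d

/-- Projective `m`-space over `K`. -/
abbrev Pm (K : Type) [Field K] (m : ℕ) := ℙ K (Fin (m+1) → K)

/-- The target projective space `ℙ^n`, `n = C(m+d,m) - 1`, of the degree-`d` Veronese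
embedding, realized as the projectivization of the dual of the space of degree-`d` forms
(the space of degree-`d` symmetric tensors). -/
abbrev PN (K : Type) [Field K] (m d : ℕ) := ℙ K (Module.Dual K (Hd K m d))

variable {K : Type} [Field K] {m : ℕ}

/-- Hilbert function of `R/I` in degree `t`. -/
def hilbQ (I : Ideal (PR K m)) (t : ℕ) : ℕ :=
  Module.finrank K ((Hd K m t).map (Ideal.Quotient.mkₐ K I).toLinearMap)

/-- The degree (length) of the projective scheme defined by `I`: the eventual value of the
Hilbert function of `R/I`. -/
def idealDeg (I : Ideal (PR K m)) : ℕ := Filter.limsup (fun t => hilbQ I t) Filter.atTop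

/-- `h^1(𝓘_Z(d))` for the zero-dimensional scheme `Z` with (saturated) ideal `I`:
it equals `deg Z - dim (R/I)_d`. -/
def h1I (I : Ideal (PR K m)) (d : ℕ) : ℕ := idealDeg I - hilbQ I d

/-- An ideal is homogeneous. -/
def IsHomogI (I : Ideal (PR K m)) : Prop :=
  ∀ f ∈ I, ∀ n : ℕ, MvPolynomial.homogeneousComponent n f ∈ I

/-- An ideal is saturated with respect to the irrelevant maximal ideal. -/
def IsSatI (I : Ideal (PR K m)) : Prop :=
  ∀ f : PR K m, (∀ i, MvPolynomial.X i * f ∈ I) → f ∈ I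

/-- A closed subscheme of `ℙ^m`, given by its saturated homogeneous ideal. -/
structure PSub (K : Type) [Field K] (m : ℕ) where
  I : Ideal (PR K m)
  homog : IsHomogI I
  sat : IsSatI I

/-- A (closed sub)scheme is zero-dimensional iff the Hilbert function of `R/I` is bounded. -/
def IsZeroDimI (I : Ideal (PR K m)) : Prop := ∃ C, ∀ t, hilbQ I t ≤ C

/-- A polynomial vanishes at a projective point (every homogeneous component vanishes
at a representative). -/
def vanishesAt (f : PR K m) (a : Pm K m) : Prop :=
  ∀ n : ℕ, MvPolynomial.eval a.rep (MvPolynomial.homogeneousComponent n f) = 0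

/-- Zero locus of an ideal in `ℙ^m`. -/
def pzeroLocus (I : Ideal (PR K m)) : Set (Pm K m) := {a | ∀ f ∈ I, vanishesAt f a}

/-- The (saturated) homogeneous ideal of a set of points of `ℙ^m`. -/
def idealOfSet (S : Set (Pm K m)) : Ideal (PR K m) :=
  Ideal.span {f : PR K m | (∃ n, f.IsHomogeneous n) ∧ ∀ a ∈ S, MvPolynomial.eval a.rep f = 0}

/-- Saturation of a homogeneous ideal: the smallest saturated homogeneous ideal containing it. -/
def satIdeal (J : Ideal (PR K m)) : Ideal (PR K m) := sInf {J' | J ≤ J' ∧ IsHomogI J' ∧ IsSatI J'}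

/-- The scheme defined by the (saturated) ideal `I` is reduced. -/
def IsReducedI (I : Ideal (PR K m)) : Prop := I = idealOfSet (pzeroLocus I)

/-- Connected component of a zero-dimensional scheme at a point `a`: the largest subscheme
supported at `a`, i.e. the `a`-primary component. -/
def componentAt (I : Ideal (PR K m)) (a : Pm K m) : Ideal (PR K m) :=
  sInf {J | I ≤ J ∧ IsHomogI J ∧ IsSatI J ∧ pzeroLocus J ⊆ {a}}

/-- Residual scheme of `Z` with respect to the hypersurface `f = 0`: the colon ideal `(I_Z : f)`. -/
def resIdeal (I : Ideal (PR K m)) (f : PR K m) : Ideal (PR K m) :=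
  Submodule.colon I (Ideal.span {f})

/-- Degree of the scheme-theoretic intersection of the subschemes defined by `I` and `J`. -/
def interDeg (I J : Ideal (PR K m)) : ℕ := idealDeg (I ⊔ J)

/-- The degree-`d` Veronese image of a vector `v`: the evaluation-at-`v` functional on
degree-`d` forms. -/
def nu (d : ℕ) (v : Fin (m+1) → K) : Module.Dual K (Hd K m d) :=
  (MvPolynomial.aeval v).toLinearMap ∘ₗ (Hd K m d).subtype

/-- The linear span of the Veronese image `ν_d(S)` of a set `S` of points of `ℙ^m`. -/
def dualSpan (d : ℕ) (S : Set (Pm K m)) : Submodule K (Module.Dual K (Hd K m d)) :=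
  Submodule.span K ((fun a => nu d a.rep) '' S)

/-- The linear span `⟨ν_d(Z)⟩` of the Veronese image of the subscheme with ideal `I`:
the annihilator of the degree-`d` part of `I`. -/
def schemeSpanSub (I : Ideal (PR K m)) (d : ℕ) : Submodule K (Module.Dual K (Hd K m d)) where
  carrier := {φ | ∀ f : Hd K m d, (f : PR K m) ∈ I → φ f = 0}
  add_mem' := by
    intro a b ha hb f hf
    simp [LinearMap.add_apply, ha f hf, hb f hf]
  zero_mem' := by intro f hf; simp
  smul_mem' := by
    intro c a ha f hf
    simp [LinearMap.smul_apply, ha f hf]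

/-- `P ∈ ⟨ν_d(Z)⟩`, for `Z` the subscheme with ideal `I`. -/
def inSpanI (I : Ideal (PR K m)) (d : ℕ) (P : PN K m d) : Prop := P.rep ∈ schemeSpanSub I d

/-- `P ∈ ⟨ν_d(S)⟩` for a set `S` of points of `ℙ^m`. -/
def inSpanSet (d : ℕ) (S : Set (Pm K m)) (P : PN K m d) : Prop := P.rep ∈ dualSpan d S

/-- `L` is a linear subspace of `ℙ^m`. -/
def IsLinearSub (L : Set (Pm K m)) : Prop :=
  ∃ W : Submodule K (Fin (m+1) → K), L = {a | a.submodule ≤ W}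

/-- `L` is a line of `ℙ^m`. -/
def IsLine (L : Set (Pm K m)) : Prop :=
  ∃ W : Submodule K (Fin (m+1) → K), Module.finrank K W = 2 ∧ L = {a | a.submodule ≤ W}

/-- `L` is a plane of `ℙ^m`. -/
def IsPlane (L : Set (Pm K m)) : Prop :=
  ∃ W : Submodule K (Fin (m+1) → K), Module.finrank K W = 3 ∧ L = {a | a.submodule ≤ W}

/-- `J` is the (saturated homogeneous) ideal of a conic of `ℙ^m`: a degree-2 curve contained
in a plane (possibly reducible). -/
def IsConic (J : Ideal (PR K m)) : Prop :=
  ∃ (W : Submodule K (Fin (m+1) → K)) (q : PR K m),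
    Module.finrank K W = 3 ∧ q.IsHomogeneous 2 ∧
    q ∉ idealOfSet {a : Pm K m | a.submodule ≤ W} ∧
    J = satIdeal (idealOfSet {a : Pm K m | a.submodule ≤ W} ⊔ Ideal.span {q})

/-- The algebra of polynomial functions on a `K`-vector space. -/
def polyFunctions (K V : Type) [Field K] [AddCommGroup V] [Module K V] : Subalgebra K (V → K) :=
  Algebra.adjoin K {g : V → K | ∃ φ : V →ₗ[K] K, g = ⇑φ}

/-- Zariski closure of a subset of a projective space. -/
def zClosure {V : Type} [AddCommGroup V] [Module K V] (T : Set (ℙ K V)) : Set (ℙ K V) :=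
  {P | ∀ F ∈ polyFunctions K V, (∀ Q ∈ T, ∀ c : K, F (c • Q.rep) = 0) →
    ∀ c : K, F (c • P.rep) = 0}

/-- The Veronese variety `X_{m,d} = ν_d(ℙ^m)` as a subset of `PN K m d`. -/
def XSet (K : Type) [Field K] (m d : ℕ) : Set (PN K m d) :=
  {Q | ∃ a : Pm K m, Q.submodule = Submodule.span K {nu d a.rep}}

/-- The image `ν_d(S)` of a set of points of `ℙ^m`, as a subset of `PN K m d`. -/
def nuSet (d : ℕ) (S : Set (Pm K m)) : Set (PN K m d) :=
  {Q | ∃ a ∈ S, Q.submodule = Submodule.span K {nu d a.rep}}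

/-- The rank of a point `P` of `PN` with respect to a subset `Y ⊆ PN`. -/
def rankWrt {m d : ℕ} (Y : Set (PN K m d)) (P : PN K m d) : ℕ :=
  sInf {r | ∃ S : Finset (PN K m d), ↑S ⊆ Y ∧ S.card = r ∧
    P.rep ∈ Submodule.span K (Projectivization.rep '' (S : Set (PN K m d)))}

/-- The `s`-th secant variety of `Y ⊆ PN`: the Zariski closure of the union of the spans
of `s` points of `Y`. -/
def secantWrt {m d : ℕ} (Y : Set (PN K m d)) (s : ℕ) : Set (PN K m d) :=
  zClosure {Q | ∃ S : Finset (PN K m d), ↑S ⊆ Y ∧ S.card ≤ s ∧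
    Q.rep ∈ Submodule.span K (Projectivization.rep '' (S : Set (PN K m d)))}

/-- The border rank of `P` with respect to `Y ⊆ PN`. -/
def brankWrt {m d : ℕ} (Y : Set (PN K m d)) (P : PN K m d) : ℕ :=
  sInf {s | 0 < s ∧ P ∈ secantWrt Y s}

/-- Symmetric rank. -/
def srank {m : ℕ} (d : ℕ) (P : PN K m d) : ℕ := rankWrt (XSet K m d) P

/-- Border rank. -/
def brank {m : ℕ} (d : ℕ) (P : PN K m d) : ℕ := brankWrt (XSet K m d) P

/-- Cactus rank: minimal degree of a zero-dimensional closed subscheme `E ⊂ ℙ^m` with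
`P ∈ ⟨ν_d(E)⟩`. -/
def crank {m : ℕ} (d : ℕ) (P : PN K m d) : ℕ :=
  sInf {c | ∃ Z : PSub K m, IsZeroDimI Z.I ∧ idealDeg Z.I = c ∧ inSpanI Z.I d P}

/-- `σ_{s,r}(X_{m,d})`. -/
def sigmaSet (K : Type) [Field K] (m d s r : ℕ) : Set (PN K m d) :=
  {P | brank d P = s ∧ srank d P = r}

/-- A property `Φ` holds for a general `k`-tuple of points of the linear subspace of `ℙ^m`
determined by `W`. -/
def GenerallyOn (W : Submodule K (Fin (m+1) → K)) (k : ℕ)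
    (Φ : (Fin k → Pm K m) → Prop) : Prop :=
  ∃ w : Fin 3 → W, Submodule.span K (Set.range fun j => (w j : Fin (m+1) → K)) = W ∧
    ∃ F : MvPolynomial (Fin k × Fin 3) K, F ≠ 0 ∧
      ∀ c : Fin k → Fin 3 → K,
        MvPolynomial.eval (fun p => c p.1 p.2) F ≠ 0 →
        ∀ e : Fin k → Pm K m,
          (∀ i, (e i).submodule = Submodule.span K {∑ j, c i j • (w j : Fin (m+1) → K)}) → Φ e

end

/-!
By duality `⟨ν_d(Z)⟩` is the annihilator of the forms of degree `d` in the ideal `I_Z`. Put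
`W = A ∪ B`, and let `l` be a linear form that is a nonzerodivisor modulo `I_W`; as `W` is
zero-dimensional, `l` is then a nonzerodivisor modulo every saturated ideal containing `I_W`.
The hypothesis `h¹(I_{Res_D(W)}(d - t)) = 0` says that, modulo `(I_W : f)`, every form of degree
`k + (d - t)` is `l ^ k` times a form of degree `d - t`. This lets one cancel powers of `l`: every
form of degree `d` in the saturation of `I_A + f (I_B : f)` already lies in `I_A + I_B`. A point of
both spans therefore lies in the span of the scheme with that saturated ideal, so minimality of `A`
forces `(I_B : f) ⊆ (I_A : f)`. By symmetry the two colon ideals agree, and as `B` is reduced both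
are the ideal of `E`.

The transpose `T` of multiplication by `f` sends `ν_d(a)` to `f(a) ν_{d-t}(a)`. As `E ⊆ Res_D(W)`,
the same hypothesis makes `ν_{d-t}(E)` linearly independent, so `T` is injective on `⟨ν_d(E)⟩`. It
maps `⟨ν_d(A)⟩` into `⟨ν_{d-t}(E)⟩ = T ⟨ν_d(E)⟩`, and its kernel meets `⟨ν_d(A)⟩` in
`⟨ν_d(A ∩ D)⟩`, and likewise for `B`; this is the decomposition of the intersection. Finally, a form
vanishing at the points of `E` other than `a` but not at `a` is a nonzerodivisor modulo the
`a`-primary component of `I_A`, and cancelling it from `f I_E ⊆ I_A` describes that component.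
-/

section

open MvPolynomial

variable {K : Type} [Field K] {m : ℕ}

section Basics

attribute [local instance] MvPolynomial.gradedAlgebra

theorem coe_decompose_apply (p : PR K m) (n : ℕ) :
    (DirectSum.decompose (homogeneousSubmodule (Fin (m + 1)) K) p n : PR K m) =
      homogeneousComponent n p :=
  decomposition.decompose'_apply p n

theorem homogeneousComponent_add_mul {s : ℕ} {p : PR K m} (hp : p.IsHomogeneous s)
    (q : PR K m) (n : ℕ) :
    homogeneousComponent (s + n) (p * q) = p * homogeneousComponent n q := by
  simpa only [coe_decompose_apply] using
    DirectSum.coe_decompose_mul_add_of_left_mem (homogeneousSubmodule (Fin (m + 1)) K) hp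

theorem isHomogI_iff_isHomogeneous {I : Ideal (PR K m)} :
    IsHomogI I ↔ I.IsHomogeneous (homogeneousSubmodule (Fin (m + 1)) K) :=
  ⟨fun h n p hp => coe_decompose_apply p n ▸ h p hp n,
    fun h p hp n => coe_decompose_apply p n ▸ h n hp⟩

theorem isHomogI_top : IsHomogI (⊤ : Ideal (PR K m)) :=
  fun _ _ _ => Submodule.mem_top

theorem IsHomogI.sup_span_singleton_mul {I J : Ideal (PR K m)} (hI : IsHomogI I) (hJ : IsHomogI J)
    {f : PR K m} {t : ℕ} (hf : f.IsHomogeneous t) : IsHomogI (I ⊔ Ideal.span {f} * J) := by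
  rw [isHomogI_iff_isHomogeneous] at hI hJ ⊢
  exact hI.sup ((Ideal.homogeneous_span _ _ fun _ h => ⟨t, h ▸ hf⟩).mul hJ)

/-- Restriction of polynomials to the line through the origin spanned by `v`, parametrised by
`X ↦ X • v`. Its coefficients are the values at `v` of the homogeneous components, so its kernel
consists of the polynomials vanishing at the projective point `[v]`. -/
noncomputable def restrictLine (v : Fin (m + 1) → K) : PR K m →ₐ[K] Polynomial K :=
  aeval fun i => Polynomial.C (v i) * Polynomial.X

theorem restrictLine_monomial (v : Fin (m + 1) → K) (s : Fin (m + 1) →₀ ℕ) (c : K) :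
    restrictLine v (monomial s c) =
      Polynomial.C (eval v (monomial s c)) * Polynomial.X ^ s.degree := by
  simp [restrictLine, aeval_monomial, eval_monomial, mul_pow, Finsupp.degree_eq_sum,
    Finsupp.prod_fintype, Finset.prod_mul_distrib, Finset.prod_pow_eq_pow_sum, mul_assoc]

theorem coeff_restrictLine (v : Fin (m + 1) → K) (p : PR K m) (n : ℕ) :
    (restrictLine v p).coeff n = eval v (homogeneousComponent n p) := by
  induction p using MvPolynomial.induction_on' with
  | monomial s c =>
    rw [restrictLine_monomial, Polynomial.coeff_C_mul_X_pow,
      homogeneousComponent_of_mem (isHomogeneous_monomial c rfl), apply_ite (eval v), map_zero]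
  | add p q hp hq => rw [map_add, map_add, map_add, Polynomial.coeff_add, hp, hq]

theorem restrictLine_of_isHomogeneous (v : Fin (m + 1) → K) {s : ℕ} {p : PR K m}
    (hp : p.IsHomogeneous s) :
    restrictLine v p = Polynomial.C (eval v p) * Polynomial.X ^ s := by
  ext n
  rw [coeff_restrictLine, homogeneousComponent_of_mem hp, Polynomial.coeff_C_mul_X_pow,
    apply_ite (eval v), map_zero]

theorem eval_smul_of_isHomogeneous {s : ℕ} {p : PR K m} (hp : p.IsHomogeneous s) (c : K)
    (v : Fin (m + 1) → K) : eval (c • v) p = c ^ s * eval v p := by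
  have hcomp : (Polynomial.aeval c).comp (restrictLine v) = aeval (c • v) := by
    ext i
    simp [restrictLine, mul_comm c]
  have h := DFunLike.congr_fun hcomp p
  rw [AlgHom.comp_apply, restrictLine_of_isHomogeneous v hp, map_mul, map_pow,
    Polynomial.aeval_C, Polynomial.aeval_X, aeval_eq_eval] at h
  exact h.symm.trans (mul_comm _ _)

theorem vanishesAt_iff_restrictLine_eq_zero {p : PR K m} {a : Pm K m} :
    vanishesAt p a ↔ restrictLine a.rep p = 0 := by
  simp only [vanishesAt, Polynomial.ext_iff, coeff_restrictLine, Polynomial.coeff_zero]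

theorem vanishesAt_iff_of_isHomogeneous {p : PR K m} {s : ℕ} (hp : p.IsHomogeneous s)
    {a : Pm K m} : vanishesAt p a ↔ eval a.rep p = 0 := by
  simp [vanishesAt_iff_restrictLine_eq_zero, restrictLine_of_isHomogeneous _ hp]

theorem vanishesAt_mul {p q : PR K m} {a : Pm K m} :
    vanishesAt (p * q) a ↔ vanishesAt p a ∨ vanishesAt q a := by
  simp only [vanishesAt_iff_restrictLine_eq_zero, map_mul, mul_eq_zero]

theorem exists_rep_ne_zero (a : Pm K m) : ∃ i, a.rep i ≠ 0 :=
  Function.ne_iff.1 a.rep_nonzero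

theorem mem_idealOfSet {S : Set (Pm K m)} {p : PR K m} :
    p ∈ idealOfSet S ↔ ∀ a ∈ S, vanishesAt p a := by
  refine ⟨fun hp a ha => ?_, fun h => ?_⟩
  · have hle : idealOfSet S ≤ RingHom.ker (restrictLine a.rep) := by
      refine Ideal.span_le.2 ?_
      rintro g ⟨⟨n, hn⟩, hg⟩
      exact vanishesAt_iff_restrictLine_eq_zero.1
        ((vanishesAt_iff_of_isHomogeneous hn).2 (hg a ha))
    exact vanishesAt_iff_restrictLine_eq_zero.2 (hle hp)
  · rw [← sum_homogeneousComponent p]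
    exact Ideal.sum_mem _ fun n _ => Ideal.subset_span
      ⟨⟨n, homogeneousComponent_isHomogeneous n p⟩, fun a ha => h a ha n⟩

theorem mem_idealOfSet_of_isHomogeneous {S : Set (Pm K m)} {p : PR K m} {s : ℕ}
    (hp : p.IsHomogeneous s) : p ∈ idealOfSet S ↔ ∀ a ∈ S, eval a.rep p = 0 := by
  simp only [mem_idealOfSet, vanishesAt_iff_of_isHomogeneous hp]

theorem isHomogI_idealOfSet (S : Set (Pm K m)) : IsHomogI (idealOfSet S) := fun p hp n =>
  (mem_idealOfSet_of_isHomogeneous (homogeneousComponent_isHomogeneous n p)).2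
    fun a ha => mem_idealOfSet.1 hp a ha n

theorem isSatI_idealOfSet (S : Set (Pm K m)) : IsSatI (idealOfSet S) := by
  refine fun _ hp => mem_idealOfSet.2 fun a ha => ?_
  obtain ⟨i, hi⟩ := exists_rep_ne_zero a
  refine (vanishesAt_mul.1 (mem_idealOfSet.1 (hp i) a ha)).resolve_left fun hX => hi ?_
  simpa using (vanishesAt_iff_of_isHomogeneous (isHomogeneous_X K i)).1 hX

theorem le_idealOfSet_iff {I : Ideal (PR K m)} {S : Set (Pm K m)} :
    I ≤ idealOfSet S ↔ S ⊆ pzeroLocus I :=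
  ⟨fun h a ha _ hp => mem_idealOfSet.1 (h hp) a ha,
    fun h p hp => mem_idealOfSet.2 fun _ ha => h ha p hp⟩

theorem mem_pzeroLocus_span_singleton {f : PR K m} {t : ℕ} (hf : f.IsHomogeneous t)
    {a : Pm K m} : a ∈ pzeroLocus (Ideal.span {f}) ↔ eval a.rep f = 0 := by
  rw [← Set.singleton_subset_iff, ← le_idealOfSet_iff, Ideal.span_singleton_le_iff_mem,
    mem_idealOfSet_of_isHomogeneous hf]
  simp only [Set.mem_singleton_iff, forall_eq]

theorem mem_resIdeal {I : Ideal (PR K m)} {f g : PR K m} : g ∈ resIdeal I f ↔ f * g ∈ I := by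
  rw [resIdeal, Ideal.mem_colon_span_singleton, mul_comm]

theorem le_resIdeal (I : Ideal (PR K m)) (f : PR K m) : I ≤ resIdeal I f :=
  fun _ hg => mem_resIdeal.2 (I.mul_mem_left f hg)

theorem resIdeal_mono {I J : Ideal (PR K m)} (h : I ≤ J) (f : PR K m) :
    resIdeal I f ≤ resIdeal J f :=
  fun _ hg => mem_resIdeal.2 (h (mem_resIdeal.1 hg))

theorem IsHomogI.resIdeal {I : Ideal (PR K m)} (hI : IsHomogI I) {f : PR K m} {t : ℕ}
    (hf : f.IsHomogeneous t) : IsHomogI (resIdeal I f) := fun g hg n => by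
  rw [mem_resIdeal, ← homogeneousComponent_add_mul hf]
  exact hI _ (mem_resIdeal.1 hg) _

theorem IsSatI.resIdeal {I : Ideal (PR K m)} (hI : IsSatI I) (f : PR K m) :
    IsSatI (resIdeal I f) := fun g hg =>
  mem_resIdeal.2 <| hI _ fun i => mul_left_comm (X i) f g ▸ mem_resIdeal.1 (hg i)

theorem resIdeal_idealOfSet (S : Set (Pm K m)) {f : PR K m} {t : ℕ} (hf : f.IsHomogeneous t) :
    resIdeal (idealOfSet S) f = idealOfSet (S \ pzeroLocus (Ideal.span {f})) := by
  ext g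
  simp only [mem_resIdeal, mem_idealOfSet, vanishesAt_mul, Set.mem_sdiff,
    mem_pzeroLocus_span_singleton hf, vanishesAt_iff_of_isHomogeneous hf, or_iff_not_imp_left,
    and_imp]

theorem IsSatI.eq_top_of_X_mem_radical {J : Ideal (PR K m)} (hJ : IsSatI J)
    (hX : ∀ i, X i ∈ J.radical) : J = ⊤ := by
  have hle : Ideal.span (Set.range X) ≤ J.radical :=
    Ideal.span_le.2 (Set.range_subset_iff.2 hX)
  obtain ⟨n, hn⟩ :=
    Ideal.exists_pow_le_of_le_radical_of_fg hle (IsNoetherian.noetherian _)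
  induction n with
  | zero => simpa using hn
  | succ n ih =>
    refine ih fun u hu => hJ u fun i => hn ?_
    rw [pow_succ']
    exact Ideal.mul_mem_mul (Ideal.subset_span ⟨i, rfl⟩) hu

theorem le_satIdeal (J : Ideal (PR K m)) : J ≤ satIdeal J :=
  le_sInf fun _ h => h.1

theorem isHomogI_satIdeal (J : Ideal (PR K m)) : IsHomogI (satIdeal J) := fun p hp n =>
  Submodule.mem_sInf.2 fun J' hJ' => hJ'.2.1 p (Submodule.mem_sInf.1 hp J' hJ') n

theorem isSatI_satIdeal (J : Ideal (PR K m)) : IsSatI (satIdeal J) := fun _ hp =>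
  Submodule.mem_sInf.2 fun J' hJ' => hJ'.2.2 _ fun i => Submodule.mem_sInf.1 (hp i) J' hJ'

end Basics

section Hilbert

instance instFiniteHd (s : ℕ) : Module.Finite K (Hd K m s) :=
  Module.Finite.iff_fg.2 (homogeneousSubmodule_fg _ _ s)

/-- The space `I_s` of forms of degree `s` in the ideal `I`. -/
noncomputable def degreePart (I : Ideal (PR K m)) (s : ℕ) : Submodule K (Hd K m s) :=
  (I.restrictScalars K).comap (Hd K m s).subtype

theorem mem_degreePart {I : Ideal (PR K m)} {s : ℕ} {p : Hd K m s} :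
    p ∈ degreePart I s ↔ (p : PR K m) ∈ I :=
  Iff.rfl

theorem degreePart_mono {I J : Ideal (PR K m)} (h : I ≤ J) (s : ℕ) :
    degreePart I s ≤ degreePart J s :=
  fun _ hp => h hp

theorem hilbQ_eq_finrank_quotient (I : Ideal (PR K m)) (s : ℕ) :
    hilbQ I s = Module.finrank K (Hd K m s ⧸ degreePart I s) := by
  let g : Hd K m s →ₗ[K] PR K m ⧸ I := (Ideal.Quotient.mkₐ K I).toLinearMap ∘ₗ (Hd K m s).subtype
  have hker : degreePart I s = LinearMap.ker g := by
    ext p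
    exact Ideal.Quotient.eq_zero_iff_mem.symm
  have hrange : (Hd K m s).map (Ideal.Quotient.mkₐ K I).toLinearMap = LinearMap.range g := by
    rw [LinearMap.range_comp, Submodule.range_subtype]
  rw [hilbQ, hrange, hker]
  exact g.quotKerEquivRange.finrank_eq.symm

theorem hilbQ_add_finrank_degreePart (I : Ideal (PR K m)) (s : ℕ) :
    hilbQ I s + Module.finrank K (degreePart I s) = Module.finrank K (Hd K m s) := by
  rw [hilbQ_eq_finrank_quotient, Submodule.finrank_quotient_add_finrank]

theorem hilbQ_anti {I J : Ideal (PR K m)} (h : I ≤ J) (s : ℕ) : hilbQ J s ≤ hilbQ I s := by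
  have := Submodule.finrank_mono (degreePart_mono h s)
  have := hilbQ_add_finrank_degreePart I s
  have := hilbQ_add_finrank_degreePart J s
  omega

theorem hilbQ_inf_le (I J : Ideal (PR K m)) (s : ℕ) :
    hilbQ (I ⊓ J) s ≤ hilbQ I s + hilbQ J s := by
  have hinf : degreePart (I ⊓ J) s = degreePart I s ⊓ degreePart J s := rfl
  have := Submodule.finrank_sup_add_finrank_inf_eq (degreePart I s) (degreePart J s)
  have := Submodule.finrank_le (degreePart I s ⊔ degreePart J s)
  have := hilbQ_add_finrank_degreePart I s
  have := hilbQ_add_finrank_degreePart J s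
  have := hilbQ_add_finrank_degreePart (I ⊓ J) s
  rw [hinf] at this
  omega

theorem IsZeroDimI.mono {I J : Ideal (PR K m)} (hI : IsZeroDimI I) (h : I ≤ J) : IsZeroDimI J :=
  hI.imp fun _ hC s => (hilbQ_anti h s).trans (hC s)

theorem IsZeroDimI.inf {I J : Ideal (PR K m)} (hI : IsZeroDimI I) (hJ : IsZeroDimI J) :
    IsZeroDimI (I ⊓ J) := by
  obtain ⟨a, ha⟩ := hI
  obtain ⟨b, hb⟩ := hJ
  exact ⟨a + b, fun s => (hilbQ_inf_le I J s).trans (add_le_add (ha s) (hb s))⟩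

/-- Multiplication by a form `f` of degree `t`, from forms of degree `e` to forms of degree
`t + e`. -/
noncomputable def mulForm {f : PR K m} {t : ℕ} (hf : f.IsHomogeneous t) (e : ℕ) :
    Hd K m e →ₗ[K] Hd K m (t + e) :=
  (LinearMap.mulLeft K f).restrict fun _ hp => hf.mul hp

@[simp]
theorem coe_mulForm {f : PR K m} {t : ℕ} (hf : f.IsHomogeneous t) (e : ℕ) (p : Hd K m e) :
    (mulForm hf e p : PR K m) = f * p :=
  rfl

theorem comap_mulForm_degreePart (I : Ideal (PR K m)) {f : PR K m} {t : ℕ}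
    (hf : f.IsHomogeneous t) (e : ℕ) :
    (degreePart I (t + e)).comap (mulForm hf e) = degreePart (resIdeal I f) e := by
  ext p
  exact mem_resIdeal.symm

/-- Multiplication by a form `f` of degree `t`, from `(R/I)_e` to `(R/I)_(t+e)`. -/
noncomputable def mulFormQuotient (I : Ideal (PR K m)) {f : PR K m} {t : ℕ}
    (hf : f.IsHomogeneous t) (e : ℕ) :
    (Hd K m e ⧸ degreePart I e) →ₗ[K] Hd K m (t + e) ⧸ degreePart I (t + e) :=
  (degreePart I e).mapQ (degreePart I (t + e)) (mulForm hf e) fun _ hp => I.mul_mem_left f hp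

theorem mulFormQuotient_injective {I : Ideal (PR K m)} {f : PR K m} {t : ℕ}
    (hf : f.IsHomogeneous t) (hreg : IsSMulRegular (PR K m ⧸ I) f) (e : ℕ) :
    Function.Injective (mulFormQuotient I hf e) := by
  rw [injective_iff_map_eq_zero]
  rintro ⟨p⟩ hp
  have hfp := (Submodule.Quotient.mk_eq_zero (degreePart I (t + e))).1 hp
  exact (Submodule.Quotient.mk_eq_zero _).2 (mem_of_isSMulRegular_quotient_of_smul_mem hreg hfp)

theorem hilbQ_le_hilbQ_add {I : Ideal (PR K m)} {f : PR K m} {t : ℕ}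
    (hf : f.IsHomogeneous t) (hreg : IsSMulRegular (PR K m ⧸ I) f) (e : ℕ) :
    hilbQ I e ≤ hilbQ I (t + e) := by
  simpa only [hilbQ_eq_finrank_quotient] using
    LinearMap.finrank_le_finrank_of_injective (mulFormQuotient_injective hf hreg e)

theorem codisjoint_range_iff {V V' : Type*} [AddCommGroup V] [Module K V] [AddCommGroup V']
    [Module K V'] {N : Submodule K V'} {g : V →ₗ[K] V'} :
    Codisjoint N (LinearMap.range g) ↔ ∀ u, ∃ h, u - g h ∈ N := by
  refine ⟨fun hcod u => ?_, fun hg => codisjoint_iff_le_sup.2 fun u _ => ?_⟩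
  · obtain ⟨n, hn, _, ⟨h, rfl⟩, rfl⟩ :=
      Submodule.mem_sup.1 (hcod.top_le (Submodule.mem_top (x := u)))
    exact ⟨h, by rwa [add_sub_cancel_right]⟩
  · obtain ⟨h, hh⟩ := hg u
    exact Submodule.mem_sup.2 ⟨_, hh, _, LinearMap.mem_range_self g h, sub_add_cancel u _⟩

theorem codisjoint_degreePart_range_mulForm {I : Ideal (PR K m)} {f : PR K m} {t : ℕ}
    (hf : f.IsHomogeneous t) (hreg : IsSMulRegular (PR K m ⧸ I) f) {e : ℕ}
    (he : hilbQ I (t + e) ≤ hilbQ I e) :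
    Codisjoint (degreePart I (t + e)) (LinearMap.range (mulForm hf e)) := by
  have hdim := he.antisymm' (hilbQ_le_hilbQ_add hf hreg e)
  simp only [hilbQ_eq_finrank_quotient] at hdim
  have hsurj := (LinearMap.injective_iff_surjective_of_finrank_eq_finrank hdim).1
    (mulFormQuotient_injective hf hreg e)
  refine codisjoint_range_iff.2 fun u => ?_
  obtain ⟨⟨p⟩, hp⟩ := hsurj (Submodule.Quotient.mk u)
  exact ⟨p, (Submodule.Quotient.eq _).1 hp.symm⟩

theorem hilbQ_le_idealDeg {I : Ideal (PR K m)} (hI : IsZeroDimI I) {s : ℕ}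
    (hs : ∀ n, s ≤ n → hilbQ I s ≤ hilbQ I n) : hilbQ I s ≤ idealDeg I := by
  obtain ⟨C, hC⟩ := hI
  exact Filter.le_limsup_of_frequently_le (Filter.eventually_atTop.2 ⟨s, hs⟩).frequently
    ⟨C, Filter.eventually_map.2 (Filter.Eventually.of_forall hC)⟩

theorem isHomogeneous_pow {l : PR K m} (hl : l.IsHomogeneous 1) (k : ℕ) :
    (l ^ k).IsHomogeneous k := by
  simpa using hl.pow k

theorem codisjoint_degreePart_range_mulForm_pow {I : Ideal (PR K m)} (hI : IsZeroDimI I)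
    {l : PR K m} (hl : l.IsHomogeneous 1) (hreg : IsSMulRegular (PR K m ⧸ I) l) {e : ℕ}
    (he : h1I I e = 0) (k : ℕ) :
    Codisjoint (degreePart I (k + e)) (LinearMap.range (mulForm (isHomogeneous_pow hl k) e)) := by
  have hmono : Monotone (hilbQ I) :=
    monotone_nat_of_le_succ fun n => add_comm 1 n ▸ hilbQ_le_hilbQ_add hl hreg n
  refine codisjoint_degreePart_range_mulForm _ (hreg.pow k) ?_
  calc hilbQ I (k + e) ≤ idealDeg I := hilbQ_le_idealDeg hI fun _ h => hmono h
    _ ≤ hilbQ I e := Nat.sub_eq_zero_iff_le.1 he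

theorem exists_isHomogeneous_one_isSMulRegular [Infinite K] {I : Ideal (PR K m)} (hI : IsSatI I) :
    ∃ l : PR K m, l.IsHomogeneous 1 ∧ IsSMulRegular (PR K m ⧸ I) l := by
  have hfin : (associatedPrimes (PR K m) (PR K m ⧸ I)).Finite := associatedPrimes.finite _ _
  have htop : ⊤ ∉ (hfin.image fun p => degreePart p 1).toFinset := by
    intro hmem
    obtain ⟨p, hp, hpt⟩ := (Set.Finite.mem_toFinset _).1 hmem
    obtain ⟨hprime, x, hx⟩ := (isAssociatedPrime_iff.1 hp)
    obtain ⟨y, rfl⟩ := Ideal.Quotient.mk_surjective x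
    have hp_iff (r : PR K m) : r ∈ p ↔ r * y ∈ I := by
      rw [hx, Submodule.mem_colon_singleton, Submodule.mem_bot, ← Ideal.Quotient.eq_zero_iff_mem,
        map_mul]
      rfl
    have hX (i) : X i ∈ p :=
      hpt.ge (Submodule.mem_top (x := (⟨X i, isHomogeneous_X K i⟩ : Hd K m 1)))
    exact hprime.ne_top ((Ideal.eq_top_iff_one p).2
      ((hp_iff 1).2 (by simpa using hI y fun i => (hp_iff _).1 (hX i))))
  obtain ⟨l, hl⟩ := (Set.ne_univ_iff_exists_notMem _).1
    (Subspace.biUnion_ne_univ_of_top_notMem htop)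
  refine ⟨l, l.2, by_contra fun hreg => hl ?_⟩
  have hmem : (l : PR K m) ∈ ⋃ p ∈ associatedPrimes (PR K m) (PR K m ⧸ I), (p : Set (PR K m)) := by
    rwa [biUnion_associatedPrimes_eq_compl_regular]
  simp only [Set.mem_iUnion] at hmem ⊢
  obtain ⟨p, hp, hlp⟩ := hmem
  exact ⟨degreePart p 1, (Set.Finite.mem_toFinset _).2 ⟨p, hp, rfl⟩, hlp⟩

theorem IsZeroDimI.exists_hilbQ_succ_le {I : Ideal (PR K m)} (hI : IsZeroDimI I) :
    ∃ n, hilbQ I (1 + n) ≤ hilbQ I n := by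
  by_contra! hlt
  obtain ⟨C, hC⟩ := hI
  have hmono : StrictMono (hilbQ I) := strictMono_nat_of_lt_succ fun n => add_comm 1 n ▸ hlt n
  exact absurd (hmono.le_apply (x := C + 1)) (not_le.2 (Nat.lt_succ_of_le (hC _)))

theorem exists_linear_isSMulRegular_of_le [Infinite K] {W : Ideal (PR K m)} (hW : IsSatI W)
    (hW0 : IsZeroDimI W) :
    ∃ l : PR K m, l.IsHomogeneous 1 ∧
      ∀ J, W ≤ J → IsSatI J → IsSMulRegular (PR K m ⧸ J) l := by
  obtain ⟨l, hl, hreg⟩ := exists_isHomogeneous_one_isSMulRegular hW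
  obtain ⟨n, hn⟩ := hW0.exists_hilbQ_succ_le
  have hX (i) : ∃ h : PR K m, X i ^ (1 + n) - l * h ∈ W := by
    obtain ⟨h, hh⟩ := codisjoint_range_iff.1 (codisjoint_degreePart_range_mulForm hl hreg hn)
      ⟨X i ^ (1 + n), isHomogeneous_X_pow i _⟩
    exact ⟨h, hh⟩
  refine ⟨l, hl, fun J hWJ hJ => (isSMulRegular_quotient_iff_mem_of_smul_mem J l).2 fun h hh => ?_⟩
  have htop : resIdeal J h = ⊤ := (hJ.resIdeal h).eq_top_of_X_mem_radical fun i => by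
    obtain ⟨g, hg⟩ := hX i
    refine ⟨1 + n, mem_resIdeal.2 ?_⟩
    have hsum : h * X i ^ (1 + n) = (X i ^ (1 + n) - l * g) * h + g * (l * h) := by ring
    rw [hsum]
    exact J.add_mem (J.mul_mem_right _ (hWJ hg)) (J.mul_mem_left _ hh)
  simpa using mem_resIdeal.1 (htop ▸ Submodule.mem_top : (1 : PR K m) ∈ resIdeal J h)

end Hilbert

section Saturation

theorem exists_pow_mul_mem_of_mem_satIdeal {J : Ideal (PR K m)} (hJ : IsHomogI J) {l : PR K m}
    (hl : l.IsHomogeneous 1) {g : PR K m} (hg : g ∈ satIdeal J) : ∃ k, l ^ k * g ∈ J := by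
  let colon : ℕ →o Ideal (PR K m) := ⟨fun k => resIdeal J (l ^ k), monotone_nat_of_le_succ
    fun k h hh => mem_resIdeal.2 <| by
      rw [pow_succ', mul_assoc]
      exact J.mul_mem_left l (mem_resIdeal.1 hh)⟩
  have hmem (h : PR K m) : h ∈ ⨆ k, colon k ↔ ∃ k, l ^ k * h ∈ J := by
    rw [Submodule.mem_iSup_of_chain]
    exact exists_congr fun k => mem_resIdeal
  have hhomog : IsHomogI (⨆ k, colon k) := fun h hh n => by
    obtain ⟨k, hk⟩ := (hmem h).1 hh
    exact (hmem _).2 ⟨k, mem_resIdeal.1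
      (hJ.resIdeal (isHomogeneous_pow hl k) _ (mem_resIdeal.2 hk) n)⟩
  have hsat : IsSatI (⨆ k, colon k) := fun h hh => by
    have hl' : l ∈ Submodule.span K (Set.range X) :=
      homogeneousSubmodule_one_eq_span_X (σ := Fin (m + 1)) (R := K) ▸ hl
    have hle : Ideal.span (Set.range X) ≤ resIdeal (⨆ k, colon k) h :=
      Ideal.span_le.2 <| Set.range_subset_iff.2 fun i => mem_resIdeal.2 <| mul_comm (X i) h ▸ hh i
    obtain ⟨k, hk⟩ := (hmem _).1 (mem_resIdeal.1 (hle (Submodule.span_subset_span K _ _ hl')))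
    exact (hmem h).2 ⟨k + 1, by rwa [pow_succ, mul_assoc, mul_comm l]⟩
  have hle : J ≤ ⨆ k, colon k := fun h hh => (hmem h).2 ⟨0, by simpa using hh⟩
  exact (hmem g).1 (Submodule.mem_sInf.1 hg _ ⟨hle, hhomog, hsat⟩)

theorem degreePart_satIdeal_sup_mul_le_of_codisjoint {I U Z : Ideal (PR K m)} (hI : IsHomogI I)
    (hU : IsHomogI U) {f l : PR K m} {t e : ℕ} (hf : f.IsHomogeneous t) (hl : l.IsHomogeneous 1)
    (hlI : IsSMulRegular (PR K m ⧸ I) l) (hlU : IsSMulRegular (PR K m ⧸ U) l)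
    (hZI : Z ≤ resIdeal I f) (hZU : Z ≤ U)
    (hZ : ∀ k, Codisjoint (degreePart Z (k + e))
      (LinearMap.range (mulForm (isHomogeneous_pow hl k) e))) :
    degreePart (satIdeal (I ⊔ Ideal.span {f} * U)) (t + e) ≤
      degreePart I (t + e) ⊔ (degreePart U e).map (mulForm hf e) := by
  intro g hg
  obtain ⟨k, hk⟩ := exists_pow_mul_mem_of_mem_satIdeal (hI.sup_span_singleton_mul hU hf) hl
    (mem_degreePart.1 hg)
  obtain ⟨a, ha, _, hfu, hau⟩ := Submodule.mem_sup.1 hk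
  obtain ⟨u, hu, rfl⟩ := Ideal.mem_span_singleton_mul.1 hfu
  let u₀ : Hd K m (k + e) :=
    ⟨homogeneousComponent (k + e) u, homogeneousComponent_isHomogeneous _ _⟩
  have hlg : l ^ k * g - f * u₀ ∈ I := by
    have hcomp := congrArg (homogeneousComponent (t + (k + e))) hau
    rw [map_add, homogeneousComponent_add_mul hf, Nat.add_left_comm,
      homogeneousComponent_add_mul (isHomogeneous_pow hl k),
      homogeneousComponent_of_mem g.2, if_pos rfl] at hcomp
    rw [← hcomp, add_sub_cancel_right]
    exact hI a ha _
  obtain ⟨v, hv⟩ := codisjoint_range_iff.1 (hZ k) u₀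
  have hlv : l ^ k * v ∈ U := by
    have := U.sub_mem (hU u hu (k + e)) (hZU hv)
    simpa [u₀] using this
  have hlgv : l ^ k * (g - f * v) ∈ I := by
    have hsum : l ^ k * (g - f * v) = (l ^ k * g - f * u₀) + f * (u₀ - l ^ k * v) := by ring
    rw [hsum]
    exact I.add_mem hlg (mem_resIdeal.1 (hZI hv))
  refine Submodule.mem_sup.2 ⟨g - mulForm hf e v, ?_, mulForm hf e v, ⟨v, ?_, rfl⟩,
    sub_add_cancel _ _⟩
  · exact mem_of_isSMulRegular_quotient_of_smul_mem (hlI.pow k) hlgv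
  · exact mem_of_isSMulRegular_quotient_of_smul_mem (hlU.pow k) hlv

theorem degreePart_satIdeal_sup_mul_le [Infinite K] {W I U : Ideal (PR K m)} (hW : IsSatI W)
    (hW0 : IsZeroDimI W) {f : PR K m} {t e : ℕ} (hf : f.IsHomogeneous t)
    (he : h1I (resIdeal W f) e = 0) (hWI : W ≤ I) (hI : IsHomogI I) (hIsat : IsSatI I)
    (hWU : resIdeal W f ≤ U) (hU : IsHomogI U) (hUsat : IsSatI U) :
    degreePart (satIdeal (I ⊔ Ideal.span {f} * U)) (t + e) ≤
      degreePart I (t + e) ⊔ (degreePart U e).map (mulForm hf e) := by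
  obtain ⟨l, hl, hreg⟩ := exists_linear_isSMulRegular_of_le hW hW0
  have hWf : W ≤ resIdeal W f := le_resIdeal W f
  exact degreePart_satIdeal_sup_mul_le_of_codisjoint hI hU hf hl (hreg I hWI hIsat)
    (hreg U (hWf.trans hWU) hUsat) (resIdeal_mono hWI f) hWU
    (codisjoint_degreePart_range_mulForm_pow (hW0.mono hWf) hl
      (hreg _ hWf (hW.resIdeal f)) he)

end Saturation

section Span

theorem schemeSpanSub_eq_dualAnnihilator (I : Ideal (PR K m)) (s : ℕ) :
    schemeSpanSub I s = (degreePart I s).dualAnnihilator := by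
  ext φ
  rw [Submodule.mem_dualAnnihilator]
  rfl

theorem nu_apply {s : ℕ} (v : Fin (m + 1) → K) (p : Hd K m s) :
    nu s v p = eval v (p : PR K m) := by
  simp [nu, aeval_eq_eval]

theorem schemeSpanSub_idealOfSet (S : Set (Pm K m)) (s : ℕ) :
    schemeSpanSub (idealOfSet S) s = dualSpan s S := by
  have hann : degreePart (idealOfSet S) s = (dualSpan s S).dualCoannihilator := by
    ext p
    rw [mem_degreePart, mem_idealOfSet_of_isHomogeneous p.2, dualSpan, ← SetLike.mem_coe,
      Submodule.coe_dualCoannihilator_span]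
    simp [nu_apply]
  rw [schemeSpanSub_eq_dualAnnihilator, hann, Subspace.dualCoannihilator_dualAnnihilator_eq]

theorem schemeSpanSub_anti {I J : Ideal (PR K m)} (h : I ≤ J) (s : ℕ) :
    schemeSpanSub J s ≤ schemeSpanSub I s :=
  fun _ hφ p hp => hφ p (h hp)

theorem dualSpan_le_schemeSpanSub {I : Ideal (PR K m)} {S : Set (Pm K m)}
    (h : I ≤ idealOfSet S) (s : ℕ) : dualSpan s S ≤ schemeSpanSub I s :=
  schemeSpanSub_idealOfSet S s ▸ schemeSpanSub_anti h s

theorem map_dualMap_schemeSpanSub_le (I : Ideal (PR K m)) {f : PR K m} {t : ℕ}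
    (hf : f.IsHomogeneous t) (e : ℕ) :
    (schemeSpanSub I (t + e)).map (mulForm hf e).dualMap ≤ schemeSpanSub (resIdeal I f) e := by
  rw [schemeSpanSub_eq_dualAnnihilator, schemeSpanSub_eq_dualAnnihilator,
    ← comap_mulForm_degreePart I hf]
  exact Submodule.dualAnnihilator_map_dualMap_le _ _

theorem dualMap_mulForm_nu {f : PR K m} {t : ℕ} (hf : f.IsHomogeneous t) (e : ℕ)
    (v : Fin (m + 1) → K) : (mulForm hf e).dualMap (nu (t + e) v) = eval v f • nu e v := by
  ext p
  simp [nu_apply]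

theorem dualSpan_le_map_dualMap {f : PR K m} {t : ℕ} (hf : f.IsHomogeneous t) (e : ℕ)
    {S : Set (Pm K m)} (hS : ∀ a ∈ S, eval a.rep f ≠ 0) :
    dualSpan e S ≤ (dualSpan (t + e) S).map (mulForm hf e).dualMap := by
  refine Submodule.span_le.2 (Set.image_subset_iff.2 fun a ha => ?_)
  refine ⟨(eval a.rep f)⁻¹ • nu (t + e) a.rep,
    Submodule.smul_mem _ _ (Submodule.subset_span ⟨a, ha, rfl⟩), ?_⟩
  rw [map_smul, dualMap_mulForm_nu, inv_smul_smul₀ (hS a ha)]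

theorem linearIndepOn_dualMap_comp_nu_iff {f : PR K m} {t : ℕ} (hf : f.IsHomogeneous t) (e : ℕ)
    {S : Set (Pm K m)} (hS : ∀ a ∈ S, eval a.rep f ≠ 0) :
    LinearIndepOn K ((mulForm hf e).dualMap ∘ fun a : Pm K m => nu (t + e) a.rep) S ↔
      LinearIndepOn K (fun a : Pm K m => nu e a.rep) S := by
  have hsmul : (fun a : S => (mulForm hf e).dualMap (nu (t + e) (a : Pm K m).rep)) =
      (fun a : S => Units.mk0 _ (hS a a.2)) • fun a : S => nu e (a : Pm K m).rep :=
    funext fun a => dualMap_mulForm_nu hf e _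
  have hiff := LinearIndependent.units_smul_iff (fun a : S => nu e (a : Pm K m).rep)
    fun a : S => Units.mk0 _ (hS a a.2)
  rwa [← hsmul] at hiff

theorem disjoint_dualSpan_ker_dualMap {f : PR K m} {t : ℕ} (hf : f.IsHomogeneous t) {e : ℕ}
    {S : Set (Pm K m)} (hS : ∀ a ∈ S, eval a.rep f ≠ 0)
    (hli : LinearIndepOn K (fun a : Pm K m => nu e a.rep) S) :
    Disjoint (dualSpan (t + e) S) (LinearMap.ker (mulForm hf e).dualMap) := by
  rw [dualSpan, Set.image_eq_range]
  exact Submodule.range_ker_disjoint ((linearIndepOn_dualMap_comp_nu_iff hf e hS).2 hli)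

end Span

section Separation

theorem exists_isHomogeneous_one_separating {a b : Pm K m} (h : a ≠ b) :
    ∃ l : PR K m, l.IsHomogeneous 1 ∧ eval a.rep l = 0 ∧ eval b.rep l ≠ 0 := by
  obtain ⟨i, hi⟩ := exists_rep_ne_zero a
  obtain ⟨j, hj⟩ : ∃ j, a.rep i * b.rep j ≠ a.rep j * b.rep i := by
    by_contra! hminors
    rw [← a.mk_rep, ← b.mk_rep, ne_comm, Ne, Projectivization.mk_eq_mk_iff'] at h
    refine h ⟨b.rep i / a.rep i, funext fun j => ?_⟩
    rw [Pi.smul_apply, smul_eq_mul, div_mul_eq_mul_div, div_eq_iff hi, mul_comm, ← hminors j,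
      mul_comm]
  refine ⟨C (a.rep i) * X j - C (a.rep j) * X i,
    (isHomogeneous_C_mul_X _ _).sub (isHomogeneous_C_mul_X _ _), ?_, ?_⟩
  · simp [mul_comm]
  · simpa [sub_eq_zero] using hj

theorem exists_isHomogeneous_separating {S : Finset (Pm K m)} {b : Pm K m} (hb : b ∉ S) {s : ℕ}
    (hs : S.card ≤ s) :
    ∃ g : PR K m, g.IsHomogeneous s ∧ (∀ a ∈ S, eval a.rep g = 0) ∧ eval b.rep g ≠ 0 := by
  have hne (a) (ha : a ∈ S) : a ≠ b := fun hab => hb (hab ▸ ha)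
  choose! l hl hla hlb using fun a ha => exists_isHomogeneous_one_separating (hne a ha)
  obtain ⟨i, hi⟩ := exists_rep_ne_zero b
  refine ⟨(∏ a ∈ S, l a) * X i ^ (s - S.card), ?_, fun a ha => ?_, ?_⟩
  · have hprod := (IsHomogeneous.prod S l _ hl).mul (isHomogeneous_X_pow (R := K) i (s - S.card))
    rwa [Finset.sum_const, smul_eq_mul, mul_one, Nat.add_sub_cancel' hs] at hprod
  · rw [map_mul, map_prod, Finset.prod_eq_zero ha (hla a ha), zero_mul]
  · rw [map_mul, map_prod, map_pow, eval_X]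
    exact mul_ne_zero (Finset.prod_ne_zero_iff.2 hlb) (pow_ne_zero _ hi)

theorem linearIndepOn_nu_of_card_le {S : Finset (Pm K m)} {s : ℕ} (hs : S.card ≤ s) :
    LinearIndepOn K (fun a : Pm K m => nu s a.rep) S := by
  classical
  have hsep (b : (S : Set (Pm K m))) : ∃ g : PR K m, g.IsHomogeneous s ∧
      (∀ a ∈ S.erase b, eval a.rep g = 0) ∧ eval (b : Pm K m).rep g ≠ 0 :=
    exists_isHomogeneous_separating (S.notMem_erase _) (S.card_erase_le.trans hs)
  choose g hg hga hgb using hsep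
  refine LinearIndependent.of_pairwise_dual_eq_zero_one _
    (fun b => Module.Dual.eval K _ ((eval (b : Pm K m).rep (g b))⁻¹ • ⟨g b, hg b⟩))
    (fun b a hba => ?_) fun b => ?_
  · have hgab : eval (a : Pm K m).rep (g b) = 0 :=
      hga b a (Finset.mem_erase.2 ⟨fun h => hba (Subtype.ext h.symm), a.2⟩)
    simp [nu_apply, hgab]
  · simp [nu_apply, hgb b]

theorem eval_ne_zero_of_isSMulRegular {a : Pm K m} {l : PR K m} {s : ℕ} (hl : l.IsHomogeneous s)
    (hreg : IsSMulRegular (PR K m ⧸ idealOfSet {a}) l) : eval a.rep l ≠ 0 := by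
  intro h0
  have hmem : l • (1 : PR K m) ∈ idealOfSet {a} := by
    rw [smul_eq_mul, mul_one]
    exact (mem_idealOfSet_of_isHomogeneous hl).2 fun _ hb => Set.eq_of_mem_singleton hb ▸ h0
  have hone := (mem_idealOfSet_of_isHomogeneous (isHomogeneous_one _ K)).1
    (mem_of_isSMulRegular_quotient_of_smul_mem hreg hmem) a rfl
  exact one_ne_zero (map_one (eval a.rep) ▸ hone)

theorem disjoint_schemeSpanSub_ker_dualMap {I : Ideal (PR K m)} {f : PR K m} {t e : ℕ}
    (hf : f.IsHomogeneous t)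
    (hcod : Codisjoint (degreePart I (t + e)) (LinearMap.range (mulForm hf e))) :
    Disjoint (schemeSpanSub I (t + e)) (LinearMap.ker (mulForm hf e).dualMap) := by
  rw [disjoint_iff, LinearMap.ker_dualMap_eq_dualAnnihilator_range,
    schemeSpanSub_eq_dualAnnihilator, ← Submodule.dualAnnihilator_sup_eq, hcod.eq_top,
    Submodule.dualAnnihilator_top]

theorem linearIndepOn_nu_of_h1I_eq_zero [Infinite K] {Z : Ideal (PR K m)} (hZ : IsSatI Z)
    (hZ0 : IsZeroDimI Z) {e : ℕ} (he : h1I Z e = 0) {S : Set (Pm K m)} (hS : Z ≤ idealOfSet S) :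
    LinearIndepOn K (fun a : Pm K m => nu e a.rep) S := by
  obtain ⟨l, hl, hreg⟩ := exists_linear_isSMulRegular_of_le hZ hZ0
  refine linearIndepOn_of_finite S fun F hFS hF => ?_
  lift F to Finset (Pm K m) using hF
  have hZF : Z ≤ idealOfSet F := le_idealOfSet_iff.2 (hFS.trans (le_idealOfSet_iff.1 hS))
  have hlF (a) (ha : a ∈ (F : Set (Pm K m))) : eval a.rep (l ^ F.card) ≠ 0 := by
    have hZa : Z ≤ idealOfSet {a} :=
      le_idealOfSet_iff.2 (Set.singleton_subset_iff.2 (le_idealOfSet_iff.1 hZF ha))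
    rw [map_pow]
    exact pow_ne_zero _ (eval_ne_zero_of_isSMulRegular hl (hreg _ hZa (isSatI_idealOfSet _)))
  have hker := disjoint_schemeSpanSub_ker_dualMap _
    (codisjoint_degreePart_range_mulForm_pow hZ0 hl (hreg Z le_rfl hZ) he F.card)
  refine (linearIndepOn_dualMap_comp_nu_iff (isHomogeneous_pow hl F.card) e hlF).1
    ((linearIndepOn_nu_of_card_le (Nat.le_add_right _ _)).map_injOn _ ?_)
  exact LinearMap.injOn_of_disjoint_ker (dualSpan_le_schemeSpanSub hZF _) hker

end Separation

section Residual

theorem IsSatI.inf {I J : Ideal (PR K m)} (hI : IsSatI I) (hJ : IsSatI J) : IsSatI (I ⊓ J) :=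
  fun p hp => ⟨hI p fun i => (hp i).1, hJ p fun i => (hp i).2⟩

theorem schemeSpanSub_satIdeal_sup_span [Infinite K] {W : Ideal (PR K m)} (hW : IsSatI W)
    (hW0 : IsZeroDimI W) {f : PR K m} {t e : ℕ} (hf : f.IsHomogeneous t)
    (he : h1I (resIdeal W f) e = 0) {A : PSub K m} (hWA : W ≤ A.I) :
    schemeSpanSub (satIdeal (A.I ⊔ Ideal.span {f})) (t + e) =
      schemeSpanSub A.I (t + e) ⊓ LinearMap.ker (mulForm hf e).dualMap := by
  have hdeg : degreePart (satIdeal (A.I ⊔ Ideal.span {f})) (t + e) =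
      degreePart A.I (t + e) ⊔ LinearMap.range (mulForm hf e) := by
    refine le_antisymm ?_ (sup_le (degreePart_mono (le_sup_left.trans (le_satIdeal _)) _) ?_)
    · have hle := degreePart_satIdeal_sup_mul_le (U := ⊤) hW hW0 hf he hWA A.homog A.sat le_top
        isHomogI_top fun _ _ => Submodule.mem_top
      rw [Ideal.mul_top] at hle
      exact hle.trans (sup_le_sup_left LinearMap.map_le_range _)
    · rintro _ ⟨p, rfl⟩
      exact le_satIdeal _ (Ideal.mem_sup_right
        (Ideal.mul_mem_right _ _ (Ideal.mem_span_singleton_self f)))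
  rw [schemeSpanSub_eq_dualAnnihilator, schemeSpanSub_eq_dualAnnihilator, hdeg,
    Submodule.dualAnnihilator_sup_eq, LinearMap.ker_dualMap_eq_dualAnnihilator_range]

theorem inf_schemeSpanSub_le_schemeSpanSub_satIdeal [Infinite K] {W : Ideal (PR K m)}
    (hW : IsSatI W) (hW0 : IsZeroDimI W) {f : PR K m} {t e : ℕ} (hf : f.IsHomogeneous t)
    (he : h1I (resIdeal W f) e = 0) {A B : PSub K m} (hWA : W ≤ A.I) (hWB : W ≤ B.I) :
    schemeSpanSub A.I (t + e) ⊓ schemeSpanSub B.I (t + e) ≤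
      schemeSpanSub (satIdeal (A.I ⊔ Ideal.span {f} * resIdeal B.I f)) (t + e) := by
  have hle := degreePart_satIdeal_sup_mul_le hW hW0 hf he hWA A.homog A.sat (resIdeal_mono hWB f)
    (B.homog.resIdeal hf) (B.sat.resIdeal f)
  simp only [schemeSpanSub_eq_dualAnnihilator, ← Submodule.dualAnnihilator_sup_eq]
  refine Submodule.dualAnnihilator_anti (hle.trans (sup_le_sup_left ?_ _))
  rw [← comap_mulForm_degreePart B.I hf]
  exact Submodule.map_comap_le _ _

theorem resIdeal_le_resIdeal_of_minimal [Infinite K] {W : Ideal (PR K m)} (hW : IsSatI W)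
    (hW0 : IsZeroDimI W) {f : PR K m} {t e : ℕ} (hf : f.IsHomogeneous t)
    (he : h1I (resIdeal W f) e = 0) {A B : PSub K m} (hWA : W ≤ A.I) (hWB : W ≤ B.I)
    {P : PN K m (t + e)} (hPA : inSpanI A.I (t + e) P) (hPB : inSpanI B.I (t + e) P)
    (hA : ∀ A' : PSub K m, A.I < A'.I → ¬ inSpanI A'.I (t + e) P) :
    resIdeal B.I f ≤ resIdeal A.I f := by
  let J := satIdeal (A.I ⊔ Ideal.span {f} * resIdeal B.I f)
  have hPJ : inSpanI J (t + e) P :=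
    inf_schemeSpanSub_le_schemeSpanSub_satIdeal hW hW0 hf he hWA hWB ⟨hPA, hPB⟩
  have hAJ : A.I = J := eq_of_le_of_not_lt (le_sup_left.trans (le_satIdeal _)) fun hlt =>
    hA ⟨J, isHomogI_satIdeal _, isSatI_satIdeal _⟩ hlt hPJ
  refine fun g hg => mem_resIdeal.2 (hAJ ▸ le_satIdeal _ (Ideal.mem_sup_right ?_))
  exact Ideal.mul_mem_mul (Ideal.mem_span_singleton_self f) hg

theorem inf_schemeSpanSub_eq_dualSpan_sup {I J : Ideal (PR K m)} {f : PR K m} {t : ℕ}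
    (hf : f.IsHomogeneous t) (e : ℕ) {S : Set (Pm K m)} (hS : ∀ a ∈ S, eval a.rep f ≠ 0)
    (hSI : idealOfSet S = resIdeal I f) (hSJ : idealOfSet S = resIdeal J f) :
    schemeSpanSub I (t + e) ⊓ schemeSpanSub J (t + e) = dualSpan (t + e) S ⊔
      (schemeSpanSub I (t + e) ⊓ LinearMap.ker (mulForm hf e).dualMap ⊓
        (schemeSpanSub J (t + e) ⊓ LinearMap.ker (mulForm hf e).dualMap)) := by
  have hle : dualSpan (t + e) S ≤ schemeSpanSub I (t + e) ⊓ schemeSpanSub J (t + e) :=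
    le_inf (dualSpan_le_schemeSpanSub (hSI ▸ le_resIdeal I f) _)
      (dualSpan_le_schemeSpanSub (hSJ ▸ le_resIdeal J f) _)
  have hge : schemeSpanSub I (t + e) ⊓ schemeSpanSub J (t + e) ≤
      dualSpan (t + e) S ⊔ LinearMap.ker (mulForm hf e).dualMap := by
    rw [← LinearMap.map_le_map_iff]
    calc (schemeSpanSub I (t + e) ⊓ schemeSpanSub J (t + e)).map (mulForm hf e).dualMap
        ≤ (schemeSpanSub I (t + e)).map (mulForm hf e).dualMap := Submodule.map_mono inf_le_left
      _ ≤ schemeSpanSub (resIdeal I f) e := map_dualMap_schemeSpanSub_le I hf e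
      _ = dualSpan e S := by rw [← hSI, schemeSpanSub_idealOfSet]
      _ ≤ (dualSpan (t + e) S).map (mulForm hf e).dualMap := dualSpan_le_map_dualMap hf e hS
  rw [← inf_inf_distrib_right, inf_comm _ (LinearMap.ker _), ← sup_inf_assoc_of_le _ hle,
    inf_eq_right.2 hge]

end Residual

section Component

theorem X_mem_radical_of_pzeroLocus_eq_empty [IsAlgClosed K] {J : Ideal (PR K m)}
    (hJ : IsHomogI J) (hempty : pzeroLocus J = ∅) (i : Fin (m + 1)) : X i ∈ J.radical := by
  rw [← vanishingIdeal_zeroLocus_eq_radical (k := K) (K := K), mem_vanishingIdeal_iff]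
  intro v hv
  have hv0 : v = 0 := by
    by_contra hv0
    obtain ⟨c, hc⟩ := Projectivization.exists_smul_eq_mk_rep K v hv0
    refine (hempty ▸ Set.notMem_empty (Projectivization.mk K v hv0)) fun p hp n => ?_
    have heval : eval v (homogeneousComponent n p) = 0 := hv _ (hJ p hp n)
    rw [← hc, Units.smul_def,
      eval_smul_of_isHomogeneous (homogeneousComponent_isHomogeneous n p), heval, mul_zero]
  simp [hv0]

theorem isSMulRegular_of_disjoint_pzeroLocus [IsAlgClosed K] {J : Ideal (PR K m)}
    (hJ : IsHomogI J) (hJsat : IsSatI J) {g : PR K m} {s : ℕ} (hg : g.IsHomogeneous s)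
    (hdisj : Disjoint (pzeroLocus J) (pzeroLocus (Ideal.span {g}))) :
    IsSMulRegular (PR K m ⧸ J) g := by
  refine (isSMulRegular_quotient_iff_mem_of_smul_mem J g).2 fun h hgh => ?_
  have hhomog : IsHomogI (J ⊔ Ideal.span {g}) :=
    Ideal.mul_top (Ideal.span {g}) ▸ hJ.sup_span_singleton_mul isHomogI_top hg
  have hempty : pzeroLocus (J ⊔ Ideal.span {g}) = ∅ := Set.subset_empty_iff.1 fun a ha =>
    hdisj.le_bot ⟨fun p hp => ha p (Ideal.mem_sup_left hp),
      fun p hp => ha p (Ideal.mem_sup_right hp)⟩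
  have hle : J ⊔ Ideal.span {g} ≤ resIdeal J h := by
    refine sup_le (fun p hp => mem_resIdeal.2 (J.mul_mem_left h hp)) ?_
    rw [Ideal.span_singleton_le_iff_mem, mem_resIdeal, mul_comm]
    exact hgh
  have htop : resIdeal J h = ⊤ := (hJsat.resIdeal h).eq_top_of_X_mem_radical fun i =>
    Ideal.radical_mono hle (X_mem_radical_of_pzeroLocus_eq_empty hhomog hempty i)
  simpa using mem_resIdeal.1 (htop ▸ Submodule.mem_top : (1 : PR K m) ∈ resIdeal J h)

theorem le_componentAt (I : Ideal (PR K m)) (a : Pm K m) : I ≤ componentAt I a :=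
  le_sInf fun _ hJ => hJ.1

theorem mem_componentAt_of_mul_mem [IsAlgClosed K] {I : Ideal (PR K m)} {a : Pm K m}
    {g h : PR K m} {s : ℕ} (hg : g.IsHomogeneous s) (hga : eval a.rep g ≠ 0)
    (hgh : g * h ∈ componentAt I a) : h ∈ componentAt I a := by
  refine Submodule.mem_sInf.2 fun J hJ => ?_
  obtain ⟨-, hJhomog, hJsat, hJa⟩ := id hJ
  have hdisj : Disjoint (pzeroLocus J) (pzeroLocus (Ideal.span {g})) :=
    (Set.disjoint_singleton_left.2 (mt (mem_pzeroLocus_span_singleton hg).1 hga)).mono_left hJa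
  exact mem_of_isSMulRegular_quotient_of_smul_mem
    (isSMulRegular_of_disjoint_pzeroLocus hJhomog hJsat hg hdisj) (Submodule.mem_sInf.1 hgh J hJ)

theorem pzeroLocus_idealOfSet_singleton_subset (a : Pm K m) :
    pzeroLocus (idealOfSet {a}) ⊆ {a} := by
  refine fun b hb => by_contra fun hba => ?_
  obtain ⟨l, hl, hla, hlb⟩ := exists_isHomogeneous_one_separating (Ne.symm hba)
  have hmem : l ∈ idealOfSet {a} :=
    (mem_idealOfSet_of_isHomogeneous hl).2 fun _ hc => Set.eq_of_mem_singleton hc ▸ hla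
  exact hlb ((vanishesAt_iff_of_isHomogeneous hl).1 (hb l hmem))

theorem mem_componentAt_of_idealOfSet_le_resIdeal [IsAlgClosed K] {I : Ideal (PR K m)}
    {S : Finset (Pm K m)} {f : PR K m} (hS : idealOfSet S ≤ resIdeal I f) {a : Pm K m}
    (ha : a ∉ S) : f ∈ componentAt I a := by
  obtain ⟨g, hg, hgS, hga⟩ := exists_isHomogeneous_separating ha le_rfl
  refine mem_componentAt_of_mul_mem hg hga (le_componentAt I a ?_)
  rw [mul_comm]
  exact mem_resIdeal.1 (hS ((mem_idealOfSet_of_isHomogeneous hg).2 hgS))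

theorem componentAt_eq_idealOfSet_singleton [IsAlgClosed K] {I : Ideal (PR K m)}
    {S : Finset (Pm K m)} {f : PR K m} {t : ℕ} (hf : f.IsHomogeneous t)
    (hS : idealOfSet S ≤ resIdeal I f) {a : Pm K m} (ha : a ∈ pzeroLocus I)
    (hfa : eval a.rep f ≠ 0) : componentAt I a = idealOfSet {a} := by
  classical
  refine le_antisymm (sInf_le ⟨le_idealOfSet_iff.2 (Set.singleton_subset_iff.2 ha),
    isHomogI_idealOfSet _, isSatI_idealOfSet _, pzeroLocus_idealOfSet_singleton_subset a⟩) ?_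
  intro h hh
  obtain ⟨g, hg, hgS, hga⟩ := exists_isHomogeneous_separating (S.notMem_erase a) le_rfl
  have hgh : g * h ∈ idealOfSet S := mem_idealOfSet.2 fun b hb => vanishesAt_mul.2 <| by
    by_cases hba : b = a
    · exact Or.inr (mem_idealOfSet.1 hh b hba)
    · exact Or.inl ((vanishesAt_iff_of_isHomogeneous hg).2 (hgS b (Finset.mem_erase.2 ⟨hba, hb⟩)))
  have hfgh : f * (g * h) ∈ componentAt I a := le_componentAt I a (mem_resIdeal.1 (hS hgh))
  exact mem_componentAt_of_mul_mem hg hga (mem_componentAt_of_mul_mem hf hfa hfgh)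

theorem mem_componentAt_of_componentAt_ne [IsAlgClosed K] {I : Ideal (PR K m)}
    {S : Set (Pm K m)} (hfin : S.Finite) {f : PR K m} {t : ℕ} (hf : f.IsHomogeneous t)
    (hfS : ∀ a ∈ S, eval a.rep f ≠ 0) (hS : idealOfSet S ≤ resIdeal I f) {a : Pm K m}
    (ha : a ∈ pzeroLocus I) (hne : componentAt I a ≠ idealOfSet {a}) : f ∈ componentAt I a := by
  lift S to Finset (Pm K m) using hfin
  have hfa : eval a.rep f = 0 :=
    by_contra fun hfa => hne (componentAt_eq_idealOfSet_singleton hf hS ha hfa)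
  exact mem_componentAt_of_idealOfSet_le_resIdeal hS fun haS => hfS a haS hfa

end Component

theorem stmt6_general (K : Type) [Field K] [IsAlgClosed K]
    (m d t : ℕ) (P : PN K m d)
    (A B : PSub K m) (hA0 : IsZeroDimI A.I) (hB0 : IsZeroDimI B.I)
    (hPA : inSpanI A.I d P) (hPB : inSpanI B.I d P)
    (hA : ∀ A' : PSub K m, A.I < A'.I → ¬ inSpanI A'.I d P)
    (hB : ∀ B' : PSub K m, B.I < B'.I → ¬ inSpanI B'.I d P)
    (hBred : IsReducedI B.I)
    (htd : t ≤ d) (f : PR K m) (hf : f.IsHomogeneous t)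
    (hres : h1I (resIdeal (A.I ⊓ B.I) f) (d - t) = 0) :
    (LinearIndependent K
      (fun a : (pzeroLocus B.I \ pzeroLocus (Ideal.span {f}) : Set (Pm K m)) =>
        nu d (a : Pm K m).rep)) ∧
    idealOfSet (pzeroLocus B.I \ pzeroLocus (Ideal.span {f})) = resIdeal A.I f ∧
    (∀ a ∈ pzeroLocus A.I, componentAt A.I a ≠ idealOfSet {a} →
      Ideal.span {f} ≤ componentAt A.I a) ∧
    (dualSpan d (pzeroLocus B.I \ pzeroLocus (Ideal.span {f})) ⊓
        (schemeSpanSub (satIdeal (A.I ⊔ Ideal.span {f})) d ⊓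
          schemeSpanSub (satIdeal (B.I ⊔ Ideal.span {f})) d) = ⊥) ∧
    (schemeSpanSub A.I d ⊓ schemeSpanSub B.I d =
      dualSpan d (pzeroLocus B.I \ pzeroLocus (Ideal.span {f})) ⊔
        (schemeSpanSub (satIdeal (A.I ⊔ Ideal.span {f})) d ⊓
          schemeSpanSub (satIdeal (B.I ⊔ Ideal.span {f})) d)) := by
  obtain ⟨e, rfl⟩ := Nat.exists_eq_add_of_le htd
  rw [Nat.add_sub_cancel_left] at hres
  have hW : IsSatI (A.I ⊓ B.I) := A.sat.inf B.sat
  have hW0 : IsZeroDimI (A.I ⊓ B.I) := hA0.inf hB0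
  set E := pzeroLocus B.I \ pzeroLocus (Ideal.span {f})
  have hfE (a) (ha : a ∈ E) : eval a.rep f ≠ 0 := mt (mem_pzeroLocus_span_singleton hf).2 ha.2
  have hEB : idealOfSet E = resIdeal B.I f :=
    (resIdeal_idealOfSet _ hf).symm.trans (congrArg (resIdeal · f) hBred.symm)
  have hEA : idealOfSet E = resIdeal A.I f := hEB.trans <| le_antisymm
    (resIdeal_le_resIdeal_of_minimal hW hW0 hf hres inf_le_left inf_le_right hPA hPB hA)
    (resIdeal_le_resIdeal_of_minimal hW hW0 hf hres inf_le_right inf_le_left hPB hPA hB)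
  have hli : LinearIndepOn K (fun a : Pm K m => nu e a.rep) E :=
    linearIndepOn_nu_of_h1I_eq_zero (hW.resIdeal f) (hW0.mono (le_resIdeal _ f)) hres
      (hEB ▸ resIdeal_mono inf_le_right f)
  rw [schemeSpanSub_satIdeal_sup_span hW hW0 hf hres inf_le_left,
    schemeSpanSub_satIdeal_sup_span hW hW0 hf hres inf_le_right]
  refine ⟨((linearIndepOn_dualMap_comp_nu_iff hf e hfE).2 hli).of_comp _, hEA, ?_, ?_,
    inf_schemeSpanSub_eq_dualSpan_sup hf e hfE hEA hEB⟩
  · exact fun a ha hne => (Ideal.span_singleton_le_iff_mem _).2 <|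
      mem_componentAt_of_componentAt_ne (Set.finite_coe_iff.1 hli.finite) hf hfE hEA.le ha hne
  · exact ((disjoint_dualSpan_ker_dualMap hf hfE hli).mono_right
      (inf_le_left.trans inf_le_right)).eq_bot

end

/-- Lemma 5 (`v4`): with `A ≠ B` zero-dimensional, `B` reduced, `P` in both spans and in no
span of a proper subscheme, `D` a degree-`t` hypersurface (`0 < t ≤ d`) with
`h^1(𝓘_{Res_D(A∪B)}(d-t)) = 0`, and `E := B ∖ (B ∩ D)`: `ν_d(E)` is linearly independent,
`E = Res_D(A)`, every unreduced connected component of `A` lies in `D`, and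
`⟨ν_d(A)⟩ ∩ ⟨ν_d(B)⟩` is spanned by its supplementary subspaces `⟨ν_d(E)⟩` and
`⟨ν_d(A ∩ D)⟩ ∩ ⟨ν_d(B ∩ D)⟩`. -/
theorem stmt6 (K : Type) [Field K] [IsAlgClosed K] [CharZero K]
    (m d t : ℕ) (P : PN K m d)
    (A B : PSub K m) (hA0 : IsZeroDimI A.I) (hB0 : IsZeroDimI B.I) (hAB : A.I ≠ B.I)
    (hPA : inSpanI A.I d P) (hPB : inSpanI B.I d P)
    (hA : ∀ A' : PSub K m, A.I < A'.I → ¬ inSpanI A'.I d P)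
    (hB : ∀ B' : PSub K m, B.I < B'.I → ¬ inSpanI B'.I d P)
    (hBred : IsReducedI B.I)
    (ht : 0 < t) (htd : t ≤ d) (f : PR K m) (hf : f.IsHomogeneous t) (hf0 : f ≠ 0)
    (hres : h1I (resIdeal (A.I ⊓ B.I) f) (d - t) = 0) :
    (LinearIndependent K
      (fun a : (pzeroLocus B.I \ pzeroLocus (Ideal.span {f}) : Set (Pm K m)) =>
        nu d (a : Pm K m).rep)) ∧
    idealOfSet (pzeroLocus B.I \ pzeroLocus (Ideal.span {f})) = resIdeal A.I f ∧
    (∀ a ∈ pzeroLocus A.I, componentAt A.I a ≠ idealOfSet {a} →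
      Ideal.span {f} ≤ componentAt A.I a) ∧
    (dualSpan d (pzeroLocus B.I \ pzeroLocus (Ideal.span {f})) ⊓
        (schemeSpanSub (satIdeal (A.I ⊔ Ideal.span {f})) d ⊓
          schemeSpanSub (satIdeal (B.I ⊔ Ideal.span {f})) d) = ⊥) ∧
    (schemeSpanSub A.I d ⊓ schemeSpanSub B.I d =
      dualSpan d (pzeroLocus B.I \ pzeroLocus (Ideal.span {f})) ⊔
        (schemeSpanSub (satIdeal (A.I ⊔ Ideal.span {f})) d ⊓
          schemeSpanSub (satIdeal (B.I ⊔ Ideal.span {f})) d)) :=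
  stmt6_general K m d t P A B hA0 hB0 hPA hPB hA hB hBred htd f hf hres
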